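/- Let f, g ∈ ℤ[T, T⁻¹] be nonzero Laurent polynomials with integer coefficients. Then the set of integers k such that the Laurent polynomial h = f + T^k · g has NO internal gap of length two — that is, such that there is no integer i with coeff_i(h) = 0, coeff_{i+1}(h) = 0, and elements a, b of the support of h satisfying a < i and i + 1 < b — is a finite set of integers. -/

import Mathlib

open LaurentPolynomial

/-!
For `k` large the support of `T k * g` lies far to the right of that of `f`, and for `-k` large far
to its left. No cancellation occurs then, and the space between the two supports is an internal
gap. Hence the shifts with a gap form a neighbourhood of `±∞` in `ℤ`.
-/

section InternalGap

open Filter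

variable {R : Type*} [Semiring R] {f g : R[T;T⁻¹]} {n : ℕ}

/-- A Laurent polynomial has an internal gap of length `n` if `n` consecutive coefficients vanish,
with nonzero coefficients both before and after them. The gap occupies the exponents
`i, …, i + n - 1`; it need not be maximal. -/
def HasInternalGap (n : ℕ) (h : R[T;T⁻¹]) : Prop :=
  ∃ i : ℤ, (∀ j ∈ Set.Ico i (i + n), h.coeff j = 0) ∧
    (∃ a ∈ h.coeff.support, a < i) ∧ ∃ b ∈ h.coeff.support, i + n ≤ b

lemma hasInternalGap_two_iff {h : R[T;T⁻¹]} :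
    HasInternalGap 2 h ↔ ∃ i : ℤ, h.coeff i = 0 ∧ h.coeff (i + 1) = 0 ∧
      (∃ a ∈ h.coeff.support, a < i) ∧ ∃ b ∈ h.coeff.support, i + 1 < b := by
  refine exists_congr fun i ↦ ?_
  have coeff_Ico : (∀ j ∈ Set.Ico i (i + 2), h.coeff j = 0) ↔
      h.coeff i = 0 ∧ h.coeff (i + 1) = 0 := by
    refine ⟨fun H ↦ ⟨H _ (by simp), H _ (by simp)⟩, fun ⟨h₀, h₁⟩ j hj ↦ ?_⟩
    obtain rfl | rfl : j = i ∨ j = i + 1 := by grind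
    exacts [h₀, h₁]
  have add_two_le (b : ℤ) : i + 2 ≤ b ↔ i + 1 < b := by lia
  simp only [Nat.cast_ofNat, coeff_Ico, add_two_le, and_assoc]

lemma support_coeff_nonempty (hf : f ≠ 0) : f.coeff.support.Nonempty :=
  Finsupp.support_nonempty_iff.2 (AddMonoidAlgebra.coeff_eq_zero.not.2 hf)

lemma hasInternalGap_add (hf : f ≠ 0) (hg : g ≠ 0) {i : ℤ}
    (hfi : ∀ a ∈ f.coeff.support, a < i) (hgi : ∀ b ∈ g.coeff.support, i + n ≤ b) :
    HasInternalGap n (f + g) := by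
  have coeff_f {j : ℤ} (hj : i ≤ j) : f.coeff j = 0 :=
    Finsupp.notMem_support_iff.1 fun hmem ↦ (hfi j hmem).not_ge hj
  have coeff_g {j : ℤ} (hj : j < i + n) : g.coeff j = 0 :=
    Finsupp.notMem_support_iff.1 fun hmem ↦ (hgi j hmem).not_gt hj
  obtain ⟨a, ha⟩ := support_coeff_nonempty hf
  obtain ⟨b, hb⟩ := support_coeff_nonempty hg
  have hai := hfi a ha
  have hbi := hgi b hb
  refine ⟨i, fun j hj ↦ ?_, ⟨a, ?_, hai⟩, b, ?_, hbi⟩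
  · simp [coeff_f hj.1, coeff_g hj.2]
  · simpa [coeff_g (show a < i + n by lia)] using ha
  · simpa [coeff_f (show i ≤ b by lia)] using hb

lemma T_mul_ne_zero (k : ℤ) (hg : g ≠ 0) : T k * g ≠ 0 :=
  (isUnit_T k).mul_right_eq_zero.not.2 hg

lemma exists_add_eq_of_mem_support_T_mul {k j : ℤ} (hj : j ∈ (T k * g).coeff.support) :
    ∃ b ∈ g.coeff.support, k + b = j :=
  Finset.mem_image.1 (AddMonoidAlgebra.support_coeff_single_mul_subset g 1 k hj)

lemma eventually_atTop_hasInternalGap_add_T_mul (n : ℕ) (hf : f ≠ 0) (hg : g ≠ 0) :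
    ∀ᶠ k : ℤ in atTop, HasInternalGap n (f + T k * g) := by
  obtain ⟨M, hM⟩ := f.coeff.support.bddAbove
  obtain ⟨m, hm⟩ := g.coeff.support.bddBelow
  filter_upwards [eventually_ge_atTop (M + 1 + n - m)] with k hk
  refine hasInternalGap_add hf (T_mul_ne_zero k hg) (i := M + 1)
    (fun a ha ↦ Int.lt_add_one_of_le (hM ha)) fun j hj ↦ ?_
  obtain ⟨b, hb, rfl⟩ := exists_add_eq_of_mem_support_T_mul hj
  have hmb : m ≤ b := hm hb
  lia

lemma eventually_atBot_hasInternalGap_add_T_mul (n : ℕ) (hf : f ≠ 0) (hg : g ≠ 0) :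
    ∀ᶠ k : ℤ in atBot, HasInternalGap n (f + T k * g) := by
  obtain ⟨m, hm⟩ := f.coeff.support.bddBelow
  obtain ⟨M, hM⟩ := g.coeff.support.bddAbove
  filter_upwards [eventually_le_atBot (m - n - M - 1)] with k hk
  rw [add_comm f]
  refine hasInternalGap_add (T_mul_ne_zero k hg) hf (i := m - n) (fun j hj ↦ ?_) fun a ha ↦ ?_
  · obtain ⟨b, hb, rfl⟩ := exists_add_eq_of_mem_support_T_mul hj
    have hbM : b ≤ M := hM hb
    lia
  · simpa using hm ha

theorem finite_shifts_without_gap_general (n : ℕ) (hf : f ≠ 0) (hg : g ≠ 0) :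
    {k : ℤ | ¬ HasInternalGap n (f + T k * g)}.Finite := by
  rw [← eventually_cofinite, Int.cofinite_eq, eventually_sup]
  exact ⟨eventually_atBot_hasInternalGap_add_T_mul n hf hg,
    eventually_atTop_hasInternalGap_add_T_mul n hf hg⟩

end InternalGap

/-- For nonzero integer Laurent polynomials `f, g`, there are only finitely
many integers `k` such that `h = f + T^k * g` has no internal gap of two
consecutive vanishing coefficients (i.e. no `i` with `h i = 0`, `h (i+1) = 0`,
and support elements of `h` strictly on both sides of `{i, i+1}`). -/
theorem finite_shifts_without_gap
    (f g : LaurentPolynomial ℤ) (hf : f ≠ 0) (hg : g ≠ 0) :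
    {k : ℤ | ¬ ∃ i : ℤ,
        ((f + T k * g : LaurentPolynomial ℤ)).coeff i = 0 ∧
        ((f + T k * g : LaurentPolynomial ℤ)).coeff (i + 1) = 0 ∧
        (∃ a ∈ (f + T k * g : LaurentPolynomial ℤ).coeff.support, a < i) ∧
        (∃ b ∈ (f + T k * g : LaurentPolynomial ℤ).coeff.support, i + 1 < b)}.Finite := by
  simpa only [hasInternalGap_two_iff] using finite_shifts_without_gap_general 2 hf hg
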